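/- For all integers n and j with 3 < j ≤ n, χ_r(P_{2^n−1} ∪ E_j) = χ_r(P_{2^n−1}) = n. -/

import Mathlib

/-! Upper bound: the standard ranking of the path (extended by `1` to the isolated vertices outside
`1, …, 2 ^ n - 1`) is still a ranking after the edges of `E_j` are added. Fix `l`. An edge whose
two ends have label at most `l`, i.e. are not divisible by `2 ^ l`, has both ends in the same block
`{x | x / 2 ^ l = q}`: this is clear for an edge of the path, and an edge of `E_j` has an end of
label `j - 1`, so that `j - 1 ≤ l`, and lies in a component of `P ∖ A_j`, hence in a single block
of size `2 ^ (j - 1)` (`div_eq_of_adj`). So a walk all of whose labels are at most `l` stays in one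
block of size `2 ^ l`, and such a block contains only one vertex of label `l`
(`eq_of_standardLabel_eq`).

Lower bound: by induction on `m`, a ranking of a path needs `m` labels on any `2 ^ m - 1`
consecutive vertices (`le_of_interval`). The largest label occurs only once on these vertices, and
removing that vertex leaves at least `2 ^ (m - 1) - 1` consecutive vertices on one of its sides.
Adding edges can only increase the rank number (`IsRanking.mono`), which gives both equalities.
-/

open SimpleGraph

/-- `f` is a `k`-ranking of `G`: labels lie in `{1,…,k}` and whenever two distinct
vertices get the same label, every path connecting them contains a vertex of
strictly larger label. -/
def IsRanking {V : Type*} (G : SimpleGraph V) (k : ℕ) (f : V → ℕ) : Prop :=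
  (∀ v, 1 ≤ f v ∧ f v ≤ k) ∧
  ∀ u v, u ≠ v → f u = f v → ∀ p : G.Walk u v, p.IsPath → ∃ w ∈ p.support, f u < f w

/-- The rank number `χᵣ(G)`: the least `k` such that `G` admits a `k`-ranking. -/
noncomputable def rankNumber {V : Type*} (G : SimpleGraph V) : ℕ :=
  sInf {k | ∃ f : V → ℕ, IsRanking G k f}

/-- The path `P_n` on vertices `v_1, …, v_n` (vertex `vᵢ` is the natural number `i`),
with edges `vᵢ v_{i+1}` for `1 ≤ i ≤ n - 1`. -/
def pathG (n : ℕ) : SimpleGraph ℕ :=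
  SimpleGraph.fromRel (fun a b => 1 ≤ a ∧ b = a + 1 ∧ b ≤ n)

/-- The label of `vᵢ` in the standard ranking of a path: `α + 1` where `2^α` is the
largest power of `2` dividing `i`. -/
def standardLabel (i : ℕ) : ℕ := padicValNat 2 i + 1

/-- The graph `P_N ∖ A_j`: the path `P_N` with all vertices of standard label `≥ j`
deleted (formally, adjacency is restricted to vertices of standard label `< j`, so the
connected components of the deleted vertices' graph are exactly the reachability
classes here). -/
def lowGraph (N j : ℕ) : SimpleGraph ℕ :=
  SimpleGraph.fromRel (fun a b => (pathG N).Adj a b ∧ standardLabel a < j ∧ standardLabel b < j)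

/-- `E_j`: the union, over the connected components `C` of `P_{2^n - 1} ∖ A_j`, of the
sets `E(v) = { {v, w} : w ∈ V(C), w not adjacent to v }`, where `v` is the vertex of `C`
with (maximal) standard label `j - 1`. -/
def Ejset (n j : ℕ) : Set (Sym2 ℕ) :=
  {e | ∃ v w : ℕ, 1 ≤ v ∧ v ≤ 2 ^ n - 1 ∧ 1 ≤ w ∧ w ≤ 2 ^ n - 1 ∧
    standardLabel v = j - 1 ∧ v ≠ w ∧ (lowGraph (2 ^ n - 1) j).Reachable v w ∧
    ¬(pathG (2 ^ n - 1)).Adj v w ∧ e = s(v, w)}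


theorem IsRanking.mono {V : Type*} {G H : SimpleGraph V} (h : G ≤ H) {k : ℕ} {f : V → ℕ}
    (hf : IsRanking H k f) : IsRanking G k f := by
  refine ⟨hf.1, fun u v huv he p hp => ?_⟩
  obtain ⟨w, hw, hlt⟩ := hf.2 u v huv he (p.mapLe h) (hp.mapLe h)
  exact ⟨w, by simpa using hw, hlt⟩

theorem pathG_adj {N a b : ℕ} :
    (pathG N).Adj a b ↔ (1 ≤ a ∧ b = a + 1 ∧ b ≤ N) ∨ (1 ≤ b ∧ a = b + 1 ∧ a ≤ N) := by
  simp only [pathG, SimpleGraph.fromRel_adj]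
  constructor
  · exact fun h => h.2
  · intro h
    exact ⟨by omega, h⟩

theorem exists_walk_interval {N : ℕ} (x d : ℕ) (hx : 1 ≤ x) (hd : x + d ≤ N) :
    ∃ p : (pathG N).Walk x (x + d), ∀ w ∈ p.support, x ≤ w ∧ w ≤ x + d := by
  induction d with
  | zero => exact ⟨SimpleGraph.Walk.nil, by simp⟩
  | succ d ih =>
    obtain ⟨p, hp⟩ := ih (by omega)
    have hadj : (pathG N).Adj (x + d) (x + (d + 1)) := pathG_adj.2 (Or.inl (by omega))
    refine ⟨p.concat hadj, fun w hw => ?_⟩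
    rw [SimpleGraph.Walk.support_concat, List.mem_append,
      List.mem_singleton] at hw
    rcases hw with hw | rfl
    · have := hp w hw
      omega
    · omega

/-- The largest label on an interval of a path is attained at most once. -/
theorem max_unique {N k M a b : ℕ} {f : ℕ → ℕ} (hf : IsRanking (pathG N) k f) (ha : 1 ≤ a)
    (hb : b ≤ N + 1) (hM : ∀ x, a ≤ x → x < b → f x ≤ M) {x y : ℕ} (hax : a ≤ x) (hxy : x < y)
    (hyb : y < b) (hfx : f x = M) (hfy : f y = M) : False := by
  obtain ⟨d, rfl⟩ := Nat.exists_eq_add_of_lt hxy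
  obtain ⟨p, hp⟩ := exists_walk_interval (N := N) x (d + 1) (by omega) (by omega)
  obtain ⟨w, hw, hlt⟩ := hf.2 x (x + (d + 1)) (by omega) (hfx.trans hfy.symm) p.bypass
    p.bypass_isPath
  have h1 := hp w (p.support_bypass_subset_support hw)
  have h2 := hM w (by omega) (by omega)
  omega

/-- If the labels on at least `2 ^ m - 1` consecutive vertices `a, …, b - 1` of a path are at most
`M`, then `m ≤ M`. -/
theorem le_of_interval {N k : ℕ} {f : ℕ → ℕ} (hf : IsRanking (pathG N) k f) (m : ℕ) :
    ∀ M a b : ℕ, 1 ≤ a → b ≤ N + 1 → a + 2 ^ m ≤ b + 1 → (∀ x, a ≤ x → x < b → f x ≤ M) →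
      m ≤ M := by
  induction m with
  | zero => intros; omega
  | succ m ih =>
    intro M a b ha hb hab hM
    have hpos : 1 ≤ 2 ^ m := Nat.one_le_two_pow
    rw [pow_succ] at hab
    have hM1 : 1 ≤ M := (hf.1 a).1.trans (hM a le_rfl (by omega))
    suffices m ≤ M - 1 by omega
    by_cases hx : ∃ x, a ≤ x ∧ x < b ∧ f x = M
    · obtain ⟨x, hax, hxb, hfx⟩ := hx
      by_cases hside : a + 2 ^ m ≤ x + 1
      · refine ih (M - 1) a x ha (by omega) hside fun y hay hyx => ?_
        have h1 := hM y hay (by omega)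
        have h2 : f y ≠ M := fun h => max_unique hf ha hb hM hay hyx hxb h hfx
        omega
      · refine ih (M - 1) (x + 1) b (by omega) hb (by omega) fun y hxy hyb => ?_
        have h1 := hM y (by omega) hyb
        have h2 : f y ≠ M := fun h => max_unique hf ha hb hM hax hxy hyb hfx h
        omega
    · refine ih (M - 1) a b ha hb (by omega) fun y hay hyb => ?_
      have h1 := hM y hay hyb
      have h2 : f y ≠ M := fun h => hx ⟨y, hay, hyb, h⟩
      omega

theorem le_of_isRanking {n k : ℕ} {f : ℕ → ℕ} (hf : IsRanking (pathG (2 ^ n - 1)) k f) :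
    n ≤ k := by
  have hpos : 1 ≤ 2 ^ n := Nat.one_le_two_pow
  exact le_of_interval hf n k 1 (2 ^ n) le_rfl (by omega) (by omega) fun x _ _ => (hf.1 x).2

theorem standardLabel_le_iff {x l : ℕ} (hx : 1 ≤ x) : standardLabel x ≤ l ↔ ¬ 2 ^ l ∣ x := by
  rw [padicValNat_dvd_iff_le (by omega), standardLabel]
  omega

theorem succ_div_eq {x l : ℕ} (h : standardLabel (x + 1) ≤ l) : (x + 1) / 2 ^ l = x / 2 ^ l := by
  rw [Nat.succ_div, if_neg ((standardLabel_le_iff (by omega)).1 h), add_zero]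

theorem pathG_div_eq {N l x y : ℕ} (h : (pathG N).Adj x y) (hx : standardLabel x ≤ l)
    (hy : standardLabel y ≤ l) : x / 2 ^ l = y / 2 ^ l := by
  rcases pathG_adj.1 h with ⟨_, rfl, _⟩ | ⟨_, rfl, _⟩
  · exact (succ_div_eq hy).symm
  · exact succ_div_eq hx

theorem lowGraph_div_eq {N j x y : ℕ} (h : (lowGraph N j).Reachable x y) :
    x / 2 ^ (j - 1) = y / 2 ^ (j - 1) := by
  obtain ⟨p⟩ := h
  induction p with
  | nil => rfl
  | cons h _ ih =>
    rw [← ih]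
    simp only [lowGraph, SimpleGraph.fromRel_adj] at h
    rcases h.2 with ⟨h, h1, h2⟩ | ⟨h, h1, h2⟩
    · exact pathG_div_eq h (by omega) (by omega)
    · exact (pathG_div_eq h (by omega) (by omega)).symm

theorem Ejset_div_eq {n j l v w : ℕ} (hv : standardLabel v = j - 1)
    (hr : (lowGraph (2 ^ n - 1) j).Reachable v w) (hl : standardLabel v ≤ l) :
    v / 2 ^ l = w / 2 ^ l := by
  obtain ⟨d, rfl⟩ := Nat.exists_eq_add_of_le (hv ▸ hl)
  rw [pow_add, ← Nat.div_div_eq_div_mul, ← Nat.div_div_eq_div_mul, lowGraph_div_eq hr]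

/-- An edge of `P ∪ E_j` between vertices of label at most `l` stays within a block of size
`2 ^ l`. -/
theorem div_eq_of_adj {n j l x y : ℕ}
    (h : (pathG (2 ^ n - 1) ⊔ SimpleGraph.fromEdgeSet (Ejset n j)).Adj x y)
    (hx : standardLabel x ≤ l) (hy : standardLabel y ≤ l) : x / 2 ^ l = y / 2 ^ l := by
  rw [SimpleGraph.sup_adj, SimpleGraph.fromEdgeSet_adj] at h
  rcases h with h | ⟨⟨v, w, _, _, _, _, hv, _, hr, _, he⟩, _⟩
  · exact pathG_div_eq h hx hy
  · rcases Sym2.eq_iff.1 he with ⟨rfl, rfl⟩ | ⟨rfl, rfl⟩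
    · exact Ejset_div_eq hv hr hx
    · exact (Ejset_div_eq hv hr hy).symm

theorem mem_range_of_adj {n j x y : ℕ}
    (h : (pathG (2 ^ n - 1) ⊔ SimpleGraph.fromEdgeSet (Ejset n j)).Adj x y) :
    1 ≤ x ∧ x ≤ 2 ^ n - 1 := by
  rw [SimpleGraph.sup_adj, SimpleGraph.fromEdgeSet_adj, pathG_adj] at h
  rcases h with h | ⟨⟨v, w, _, _, _, _, _, _, _, _, he⟩, _⟩
  · omega
  · rcases Sym2.eq_iff.1 he with ⟨rfl, rfl⟩ | ⟨rfl, rfl⟩ <;> omega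

theorem div_eq_of_walk {n j l x y : ℕ}
    (p : (pathG (2 ^ n - 1) ⊔ SimpleGraph.fromEdgeSet (Ejset n j)).Walk x y)
    (hp : ∀ w ∈ p.support, standardLabel w ≤ l) : x / 2 ^ l = y / 2 ^ l := by
  induction p with
  | nil => rfl
  | cons h p ih =>
    rw [← ih fun w hw => hp w (by simp [hw])]
    exact div_eq_of_adj h (hp _ (by simp)) (hp _ (by simp))

/-- A block of size `2 ^ l` contains at most one vertex of label `l`, namely its midpoint. -/
theorem eq_of_standardLabel_eq {x y l : ℕ} (hx1 : 1 ≤ x) (hy1 : 1 ≤ y) (hx : standardLabel x = l)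
    (hy : standardLabel y = l) (h : x / 2 ^ l = y / 2 ^ l) : x = y := by
  have hx2 := (standardLabel_le_iff hx1).1 hx.le
  have hy2 := (standardLabel_le_iff hy1).1 hy.le
  obtain ⟨c, rfl⟩ : ∃ c, l = c + 1 := ⟨_, hx.symm⟩
  have hx3 : 2 ^ c ∣ x :=
    (padicValNat_dvd_iff_le (by omega)).2 (by simp [standardLabel] at hx; omega)
  have hy3 : 2 ^ c ∣ y :=
    (padicValNat_dvd_iff_le (by omega)).2 (by simp [standardLabel] at hy; omega)
  obtain ⟨a, rfl⟩ := hx3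
  obtain ⟨b, rfl⟩ := hy3
  have hpos : 0 < 2 ^ c := by positivity
  rw [pow_succ, Nat.mul_dvd_mul_iff_left hpos] at hx2 hy2
  rw [pow_succ, Nat.mul_div_mul_left _ _ hpos, Nat.mul_div_mul_left _ _ hpos] at h
  have : a = b := by omega
  rw [this]

/-- The standard ranking, extended by `1` to the isolated vertices outside `1, …, 2 ^ n - 1`. -/
def extLabel (n i : ℕ) : ℕ := if 1 ≤ i ∧ i ≤ 2 ^ n - 1 then standardLabel i else 1

theorem extLabel_isRanking {n j : ℕ} (hn : 1 ≤ n) :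
    IsRanking (pathG (2 ^ n - 1) ⊔ SimpleGraph.fromEdgeSet (Ejset n j)) n (extLabel n) := by
  constructor
  · intro v
    unfold extLabel
    split_ifs with h
    · refine ⟨Nat.le_add_left _ _, (standardLabel_le_iff h.1).2 fun hd => ?_⟩
      have := Nat.le_of_dvd h.1 hd
      omega
    · exact ⟨le_rfl, hn⟩
  · intro u v huv he p _
    by_contra! hcon
    have hr : ∀ w ∈ p.support, 1 ≤ w ∧ w ≤ 2 ^ n - 1 := by
      intro w hw
      have hnil : ¬ p.Nil := fun h => huv h.eq
      obtain ⟨e, he, hwe⟩ := (SimpleGraph.Walk.mem_support_iff_exists_mem_edges_of_not_nil hnil).1 hw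
      obtain ⟨z, rfl⟩ := Sym2.mem_iff_exists.1 hwe
      exact mem_range_of_adj (p.adj_of_mem_edges he)
    have hlab : ∀ w ∈ p.support, extLabel n w = standardLabel w := fun w hw => if_pos (hr w hw)
    have hu := p.start_mem_support
    have hv := p.end_mem_support
    rw [hlab u hu, hlab v hv] at he
    refine huv (eq_of_standardLabel_eq (hr u hu).1 (hr v hv).1 rfl he.symm
      (div_eq_of_walk p fun w hw => ?_))
    rw [← hlab w hw, ← hlab u hu]
    exact hcon w hw

/-- for all integers `n` and `j` with `3 < j ≤ n`,
`χᵣ(P_{2^n - 1} ∪ E_j) = χᵣ(P_{2^n - 1}) = n`. -/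
theorem rank_path_union_Ej (n j : ℕ) (hj1 : 3 < j) (hj2 : j ≤ n) :
    rankNumber ((pathG (2 ^ n - 1)) ⊔ SimpleGraph.fromEdgeSet (Ejset n j)) = n ∧
    rankNumber (pathG (2 ^ n - 1)) = n := by
  have hH := extLabel_isRanking (n := n) (j := j) (by omega)
  constructor
  · refine IsLeast.csInf_eq ⟨⟨_, hH⟩, ?_⟩
    rintro k ⟨f, hf⟩
    exact le_of_isRanking (hf.mono le_sup_left)
  · refine IsLeast.csInf_eq ⟨⟨_, hH.mono le_sup_left⟩, ?_⟩
    rintro k ⟨f, hf⟩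
    exact le_of_isRanking hf
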